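/- Assume F has characteristic 2, let k ≥ 2, and suppose u ∈ F^{2^k} satisfies u(i) = 0 for every i < 2^k − 3 (a Type-II node: only the last three positions are information positions). Let c be the associated codeword, let v ∈ F^4 be the vector (0, u(2^k−3), u(2^k−2), u(2^k−1)), and let c2 ∈ F^4 be its codeword under G2^{⊗2}, c2(b) = ∑_{m<4} v(m)·G2^{⊗2}(m,b). Then (i) for all 0 ≤ a < 2^{k−2} and 0 ≤ b < 4, c(4a + b) = r^{(k−2)}(a)·c2(b), and (ii) ∑_{b=0}^{3} g0inv^{(2)}(b)·c2(b) = 0, i.e., c2 is the output of a length-4 M-SPC node. (Paper's Theorem 3.) -/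

import Mathlib

open Finset

variable {F : Type*}

/-- Kronecker power of a 2×2 matrix, defined by the binary-digit product formula:
the `(i,j)` entry of `kron M k` is `∏ t < k, M i_t j_t` where `i_t, j_t` are the
`t`-th binary digits of `i` and `j`. -/
noncomputable def kron [Field F] (M : Matrix (Fin 2) (Fin 2) F) (k : ℕ) :
    Matrix (Fin (2 ^ k)) (Fin (2 ^ k)) F :=
  fun i j => ∏ t ∈ Finset.range k,
    M (if (i : ℕ).testBit t then 1 else 0) (if (j : ℕ).testBit t then 1 else 0)

/-- The 2×2 non-binary polar kernel with rows (μ, 0) and (γ, δ). -/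
noncomputable def G2 [Field F] (μ γ δ : F) : Matrix (Fin 2) (Fin 2) F := !![μ, 0; γ, δ]

/-- `Gk μ γ δ k = G2^{⊗k}`, the k-fold Kronecker power of the kernel. -/
noncomputable def Gk [Field F] (μ γ δ : F) (k : ℕ) : Matrix (Fin (2 ^ k)) (Fin (2 ^ k)) F :=
  kron (G2 μ γ δ) k

/-- `g0inv μ γ δ k` : first column of the inverse of `G2^{⊗k}`. -/
noncomputable def g0inv [Field F] (μ γ δ : F) (k : ℕ) (j : Fin (2 ^ k)) : F :=
  (Gk μ γ δ k)⁻¹ j ⟨0, Nat.two_pow_pos k⟩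

/-- `rk μ γ δ k` : last row of `G2^{⊗k}`. -/
noncomputable def rk [Field F] (μ γ δ : F) (k : ℕ) (j : Fin (2 ^ k)) : F :=
  Gk μ γ δ k ⟨2 ^ k - 1, by have := Nat.two_pow_pos k; omega⟩ j

/-- codeword associated to an input vector `u`: `cᵀ = uᵀ · G2^{⊗k}`. -/
noncomputable def codeword [Field F] (μ γ δ : F) (k : ℕ) (u : Fin (2 ^ k) → F)
    (j : Fin (2 ^ k)) : F :=
  ∑ i, u i * Gk μ γ δ k i j

theorem index_lt {p q n a b : ℕ} (ha : a < q) (hb : b < p) (h : p * q = n) :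
    p * a + b < n := by
  subst h
  have h1 : p * a + b < p * (a + 1) := by
    have hm : p * (a + 1) = p * a + p := by ring
    omega
  have h2 : p * (a + 1) ≤ p * q := Nat.mul_le_mul le_rfl ha
  omega

/-!
Splitting off the `s` low binary digits of an index identifies `M^{⊗(m+s)}` with the Kronecker
product `M^{⊗m} ⊗ M^{⊗s}`. An input supported on a single block of length `2^s` is a pure tensor
`e_a ⊗ v`, so its codeword is row `a` of `G2^{⊗m}` tensored with the codeword of `v`; the last
block gives the factor `r^{(m)}`. Since `G2^{⊗s}` is invertible, pairing a codeword with the first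
column of the inverse recovers the first input symbol, which is `0` for a Type-II node.
-/

section BlockIndex

/-- The index `2 ^ s * a + b` of position `b` in block `a`, when the `2 ^ (m + s)` positions are cut
into `2 ^ m` consecutive blocks of length `2 ^ s`. -/
def blockIndex (m s : ℕ) : Fin (2 ^ m) × Fin (2 ^ s) ≃ Fin (2 ^ (m + s)) :=
  finProdFinEquiv.trans (finCongr (pow_add 2 m s).symm)

/-- The largest index `2 ^ m - 1`: the row of `Gk` that defines `rk`, and the last block. -/
def lastIndex (m : ℕ) : Fin (2 ^ m) :=
  ⟨2 ^ m - 1, Nat.sub_lt (Nat.two_pow_pos m) one_pos⟩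

/-- The last `2 ^ s` entries of `u`; for a Type-II node (`s = 2`) this is the vector `v`. -/
def lastBlock (m s : ℕ) (u : Fin (2 ^ (m + s)) → F) (b : Fin (2 ^ s)) : F :=
  u (blockIndex m s (lastIndex m, b))

variable {m s : ℕ}

theorem coe_blockIndex (a : Fin (2 ^ m)) (b : Fin (2 ^ s)) :
    (blockIndex m s (a, b) : ℕ) = 2 ^ s * a + b := by
  simp [blockIndex, add_comm]

theorem coe_blockIndex_lastIndex (b : Fin (2 ^ s)) :
    (blockIndex m s (lastIndex m, b) : ℕ) = 2 ^ (m + s) - 2 ^ s + b := by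
  rw [coe_blockIndex, lastIndex, Nat.mul_sub_one, ← pow_add, add_comm s m]

theorem coe_blockIndex_lt_of_ne_lastIndex {a : Fin (2 ^ m)} (ha : a ≠ lastIndex m)
    (b : Fin (2 ^ s)) : (blockIndex m s (a, b) : ℕ) < 2 ^ (m + s) - 2 ^ s := by
  have ha_lt : (a : ℕ) < 2 ^ m - 1 :=
    lt_of_le_of_ne (Nat.le_sub_one_of_lt a.isLt) fun h => ha (Fin.ext h)
  rw [coe_blockIndex]
  exact index_lt ha_lt b.isLt (by rw [Nat.mul_sub_one, ← pow_add, add_comm s m])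

theorem testBit_blockIndex_of_lt (a : Fin (2 ^ m)) (b : Fin (2 ^ s)) {t : ℕ} (ht : t < s) :
    (blockIndex m s (a, b) : ℕ).testBit t = (b : ℕ).testBit t := by
  rw [coe_blockIndex, Nat.testBit_two_pow_mul_add _ b.isLt, if_pos ht]

theorem testBit_blockIndex_add (a : Fin (2 ^ m)) (b : Fin (2 ^ s)) (t : ℕ) :
    (blockIndex m s (a, b) : ℕ).testBit (s + t) = (a : ℕ).testBit t := by
  rw [coe_blockIndex, Nat.testBit_two_pow_mul_add _ b.isLt, if_neg (by omega),
    Nat.add_sub_cancel_left]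

end BlockIndex

section Kron

open scoped Kronecker

variable [Field F] (M : Matrix (Fin 2) (Fin 2) F)

theorem kron_blockIndex {m s : ℕ} (a a' : Fin (2 ^ m)) (b b' : Fin (2 ^ s)) :
    kron M (m + s) (blockIndex m s (a, b)) (blockIndex m s (a', b')) =
      kron M m a a' * kron M s b b' := by
  rw [mul_comm]
  simp only [kron, add_comm m s, prod_range_add, testBit_blockIndex_add]
  congr 1
  refine prod_congr rfl fun t ht => ?_
  simp only [testBit_blockIndex_of_lt _ _ (mem_range.1 ht)]

theorem kron_add (m s : ℕ) :
    kron M (m + s) =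
      Matrix.reindex (blockIndex m s) (blockIndex m s) (kron M m ⊗ₖ kron M s) := by
  ext i j
  obtain ⟨⟨a, b⟩, rfl⟩ := (blockIndex m s).surjective i
  obtain ⟨⟨a', b'⟩, rfl⟩ := (blockIndex m s).surjective j
  simp [kron_blockIndex]

theorem kron_zero : kron M 0 = 1 := by
  ext i j
  obtain rfl : i = j := Fin.ext (by lia)
  simp [kron]

theorem kron_one :
    kron M 1 = Matrix.reindex (finCongr (pow_one 2).symm) (finCongr (pow_one 2).symm) M := by
  ext i j
  fin_cases i <;> fin_cases j <;> simp [kron]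

variable {M}

theorem isUnit_det_kron (hM : IsUnit M.det) (k : ℕ) : IsUnit (kron M k).det := by
  induction k with
  | zero => simp [kron_zero]
  | succ k ih =>
    rw [kron_add, Matrix.det_reindex_self, Matrix.det_kronecker, kron_one,
      Matrix.det_reindex_self]
    exact (ih.pow _).mul (hM.pow _)

end Kron

section Codeword

variable [Field F] {μ γ δ : F}

theorem isUnit_det_Gk (hμ : μ ≠ 0) (hδ : δ ≠ 0) (k : ℕ) : IsUnit (Gk μ γ δ k).det :=
  isUnit_det_kron (by simp [G2, Matrix.det_fin_two, hμ, hδ]) k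

theorem codeword_eq_vecMul (k : ℕ) (u : Fin (2 ^ k) → F) :
    codeword μ γ δ k u = Matrix.vecMul u (Gk μ γ δ k) :=
  rfl

theorem sum_g0inv_mul_codeword (hμ : μ ≠ 0) (hδ : δ ≠ 0) (k : ℕ) (u : Fin (2 ^ k) → F) :
    ∑ b, g0inv μ γ δ k b * codeword μ γ δ k u b = u ⟨0, Nat.two_pow_pos k⟩ := by
  have decode : Matrix.vecMul (codeword μ γ δ k u) (Gk μ γ δ k)⁻¹ = u := by
    rw [codeword_eq_vecMul, Matrix.vecMul_vecMul,
      Matrix.mul_nonsing_inv _ (isUnit_det_Gk hμ hδ k), Matrix.vecMul_one]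
  calc ∑ b, g0inv μ γ δ k b * codeword μ γ δ k u b
      = Matrix.vecMul (codeword μ γ δ k u) (Gk μ γ δ k)⁻¹ ⟨0, Nat.two_pow_pos k⟩ :=
        sum_congr rfl fun _ _ => mul_comm _ _
    _ = u ⟨0, Nat.two_pow_pos k⟩ := by rw [decode]

variable {m s : ℕ} {u : Fin (2 ^ (m + s)) → F}

theorem codeword_blockIndex_of_support {a₀ : Fin (2 ^ m)}
    (hu : ∀ a ≠ a₀, ∀ b, u (blockIndex m s (a, b)) = 0) (a : Fin (2 ^ m)) (b : Fin (2 ^ s)) :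
    codeword μ γ δ (m + s) u (blockIndex m s (a, b)) =
      Gk μ γ δ m a₀ a * codeword μ γ δ s (fun b' => u (blockIndex m s (a₀, b'))) b := by
  calc codeword μ γ δ (m + s) u (blockIndex m s (a, b))
      = ∑ a', ∑ b', u (blockIndex m s (a', b')) * (Gk μ γ δ m a' a * Gk μ γ δ s b' b) := by
        simp only [codeword, Gk, ← kron_blockIndex]
        rw [← (blockIndex m s).sum_comp, Fintype.sum_prod_type]
    _ = ∑ b', u (blockIndex m s (a₀, b')) * (Gk μ γ δ m a₀ a * Gk μ γ δ s b' b) :=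
        Fintype.sum_eq_single a₀ fun a' ha' => sum_eq_zero fun b' _ => by
          rw [hu a' ha', zero_mul]
    _ = Gk μ γ δ m a₀ a * codeword μ γ δ s (fun b' => u (blockIndex m s (a₀, b'))) b := by
        simp only [codeword, mul_sum, mul_left_comm]

theorem codeword_blockIndex_of_lastBlock
    (hu : ∀ i : Fin (2 ^ (m + s)), (i : ℕ) < 2 ^ (m + s) - 2 ^ s → u i = 0)
    (a : Fin (2 ^ m)) (b : Fin (2 ^ s)) :
    codeword μ γ δ (m + s) u (blockIndex m s (a, b)) =
      rk μ γ δ m a * codeword μ γ δ s (lastBlock m s u) b :=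
  codeword_blockIndex_of_support
    (fun _ ha b' => hu _ (coe_blockIndex_lt_of_ne_lastIndex ha b')) a b

end Codeword

theorem eq_lastBlock_of_typeII [Zero F] {m : ℕ} {u : Fin (2 ^ (m + 2)) → F}
    (hu : ∀ i : Fin (2 ^ (m + 2)), (i : ℕ) < 2 ^ (m + 2) - 3 → u i = 0)
    {i₁ i₂ i₃ : Fin (2 ^ (m + 2))} (hi₁ : (i₁ : ℕ) = 2 ^ (m + 2) - 3)
    (hi₂ : (i₂ : ℕ) = 2 ^ (m + 2) - 2) (hi₃ : (i₃ : ℕ) = 2 ^ (m + 2) - 1)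
    {v : Fin (2 ^ 2) → F}
    (hv : ∀ b : Fin (2 ^ 2), v b =
      if (b : ℕ) = 1 then u i₁ else if (b : ℕ) = 2 then u i₂ else if (b : ℕ) = 3 then u i₃ else 0) :
    v = lastBlock m 2 u := by
  have four_le : 2 ^ 2 ≤ 2 ^ (m + 2) := Nat.pow_le_pow_right two_pos (Nat.le_add_left 2 m)
  funext b
  have index_eq := coe_blockIndex_lastIndex (m := m) b
  rw [hv, lastBlock]
  split_ifs
  any_goals exact congrArg u (Fin.ext (by omega))
  exact (hu _ (by omega)).symm

theorem stmt7_general [Field F] {μ γ δ : F} (hμ : μ ≠ 0) (hδ : δ ≠ 0) {m s : ℕ}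
    {u : Fin (2 ^ (m + s)) → F}
    (hu : ∀ i : Fin (2 ^ (m + s)), (i : ℕ) ≤ 2 ^ (m + s) - 2 ^ s → u i = 0) :
    (∀ (a : Fin (2 ^ m)) (b : Fin (2 ^ s)),
      codeword μ γ δ (m + s) u (blockIndex m s (a, b)) =
        rk μ γ δ m a * codeword μ γ δ s (lastBlock m s u) b) ∧
    ∑ b, g0inv μ γ δ s b * codeword μ γ δ s (lastBlock m s u) b = 0 := by
  refine ⟨codeword_blockIndex_of_lastBlock fun i hi => hu i hi.le, ?_⟩
  rw [sum_g0inv_mul_codeword hμ hδ]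
  exact hu _ (coe_blockIndex_lastIndex _).le

/-- Paper's Theorem 3 (Type-II node, with `k = m + 2 ≥ 2`): if only the last three input
positions are nonzero then `c(4a+b) = r^{(k−2)}(a)·c2(b)` where `c2` is the codeword of
`v = (0, u(2^k−3), u(2^k−2), u(2^k−1))` under `G2^{⊗2}`, and `c2` satisfies the length-4
M-SPC parity check. -/
theorem stmt7 [Field F] [CharP F 2] (μ γ δ : F) (hμ : μ ≠ 0) (hγ : γ ≠ 0) (hδ : δ ≠ 0)
    (m : ℕ) (u : Fin (2 ^ (m + 2)) → F)
    (hu : ∀ i : Fin (2 ^ (m + 2)), (i : ℕ) < 2 ^ (m + 2) - 3 → u i = 0)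
    (v : Fin (2 ^ 2) → F)
    (hv : ∀ b : Fin (2 ^ 2), v b =
      if (b : ℕ) = 1 then u ⟨2 ^ (m + 2) - 3, by have := Nat.two_pow_pos (m + 2); omega⟩
      else if (b : ℕ) = 2 then u ⟨2 ^ (m + 2) - 2, by have := Nat.two_pow_pos (m + 2); omega⟩
      else if (b : ℕ) = 3 then u ⟨2 ^ (m + 2) - 1, by have := Nat.two_pow_pos (m + 2); omega⟩
      else 0)
    (c2 : Fin (2 ^ 2) → F)
    (hc2 : ∀ b : Fin (2 ^ 2), c2 b = ∑ mm, v mm * Gk μ γ δ 2 mm b) :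
    (∀ (a : Fin (2 ^ m)) (b : Fin (2 ^ 2)),
      codeword μ γ δ (m + 2) u
        ⟨4 * (a : ℕ) + (b : ℕ), by
          have ha := a.isLt; have hb := b.isLt
          have h4 : (2 : ℕ) ^ 2 = 4 := by norm_num
          have hpq : (2 : ℕ) ^ (m + 2) = 2 ^ m * 4 := by rw [pow_add]; norm_num
          omega⟩
        = rk μ γ δ m a * c2 b) ∧
    ∑ b, g0inv μ γ δ 2 b * c2 b = 0 := by
  obtain rfl : v = lastBlock m 2 u := eq_lastBlock_of_typeII hu rfl rfl rfl hv
  obtain rfl : c2 = codeword μ γ δ 2 (lastBlock m 2 u) := funext hc2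
  have four_le : 2 ^ 2 ≤ 2 ^ (m + 2) := Nat.pow_le_pow_right two_pos (Nat.le_add_left 2 m)
  refine (stmt7_general hμ hδ fun i hi => hu i (by omega)).imp_left fun factor a b => ?_
  exact (congrArg _ (Fin.ext (coe_blockIndex a b).symm)).trans (factor a b)
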